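/- For every B > 0 there exists a constant c = c(B) > 0 such that for every n ≥ 2, every rate R with R − c√((log n)/n) > 0, and every positive semidefinite matrix Σ ∈ ℝ^{n×n}, Σ ≠ 0, with eigenvalues λ, there exist functions f : ℝⁿ → {1,…,⌊2^{nR}⌋} and g : {1,…,⌊2^{nR}⌋} → ℝⁿ such that for W ~ N(0, Iₙ): E[d_Σ(W, g(f(W)))] ≤ n · D_wf(λ, t′) + c n^{−B} · tr(Σ), where t′ > 0 is the water level satisfying R_wf(λ, t′) = R − c√((log n)/n). -/

import Mathlib

open MeasureTheory Matrix Real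

/-- Standard Gaussian measure `N(0, I_n)` on `ℝⁿ`. -/
noncomputable def stdGaussian (n : ℕ) : Measure (Fin n → ℝ) :=
  Measure.pi fun _ => ProbabilityTheory.gaussianReal 0 1

/-- Distortion `d_Σ(w, v) = (w - v)ᵀ Σ (w - v)`. -/
noncomputable def dSig {n : ℕ} (Sig : Matrix (Fin n) (Fin n) ℝ) (w v : Fin n → ℝ) : ℝ :=
  (w - v) ⬝ᵥ Sig.mulVec (w - v)

/-- Waterfilling distortion `D_wf(λ, t) = (1/n) Σᵢ min{λᵢ, t}`. -/
noncomputable def Dwf {n : ℕ} (lam : Fin n → ℝ) (t : ℝ) : ℝ :=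
  (1 / (n : ℝ)) * ∑ i, min (lam i) t

/-- Waterfilling rate `R_wf(λ, t) = (1/(2n)) Σᵢ max{0, log₂(λᵢ/t)}`. -/
noncomputable def Rwf {n : ℕ} (lam : Fin n → ℝ) (t : ℝ) : ℝ :=
  (1 / (2 * (n : ℝ))) * ∑ i, max 0 (Real.logb 2 (lam i / t))

open ProbabilityTheory in
lemma gaussian_ratio (m ρ : ℝ) (hρ : 0 < ρ) :
    gaussianReal m ρ.toNNReal = (gaussianReal 0 1).withDensity
      (fun z => ENNReal.ofReal ((√ρ)⁻¹ * Real.exp (z ^ 2 / 2 - (z - m) ^ 2 / (2 * ρ)))) := by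
  have h1 : ρ.toNNReal ≠ 0 := by simpa using hρ
  rw [gaussianReal_of_var_ne_zero _ h1, gaussianReal_of_var_ne_zero _ one_ne_zero,
    ← withDensity_mul _ (measurable_gaussianPDF _ _) (by fun_prop)]
  congr 1
  ext z
  simp only [gaussianPDF, Pi.mul_apply]
  rw [← ENNReal.ofReal_mul (gaussianPDFReal_nonneg _ _ _)]
  congr 1
  simp only [gaussianPDFReal, Real.coe_toNNReal _ hρ.le, NNReal.coe_one, sub_zero, mul_one]
  rw [Real.sqrt_mul (by positivity), mul_inv]
  have : Real.exp (-(z - m) ^ 2 / (2 * ρ)) = Real.exp (-z ^ 2 / 2) *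
      Real.exp (z ^ 2 / 2 - (z - m) ^ 2 / (2 * ρ)) := by
    rw [← Real.exp_add]; congr 1; ring
  rw [this]; ring

open ProbabilityTheory in
lemma pi_withDensity' {ι : Type*} [Fintype ι] (μ : ι → Measure ℝ) [∀ i, IsProbabilityMeasure (μ i)]
    (r : ι → ℝ → ENNReal) (hr : ∀ i, Measurable (r i)) [∀ i, SigmaFinite ((μ i).withDensity (r i))] :
    Measure.pi (fun i => (μ i).withDensity (r i)) =
      (Measure.pi μ).withDensity (fun z => ∏ i, r i (z i)) := by
  refine (Measure.pi_eq fun s hs => ?_)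
  rw [withDensity_apply _ (MeasurableSet.univ_pi hs), ← lintegral_indicator (MeasurableSet.univ_pi hs)]
  have : ((Set.univ.pi s).indicator fun a : ι → ℝ => ∏ i, r i (a i)) =
      fun a => ∏ i, ((s i).indicator (r i)) (a i) := by
    ext a
    by_cases h : a ∈ Set.univ.pi s
    · rw [Set.indicator_of_mem h]
      refine Finset.prod_congr rfl fun i _ => ?_
      rw [Set.indicator_of_mem (h i trivial)]
    · rw [Set.indicator_of_notMem h]
      simp only [Set.mem_pi, not_forall] at h
      obtain ⟨i, _, hi⟩ := h
      rw [Finset.prod_eq_zero (Finset.mem_univ i)]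
      rw [Set.indicator_of_notMem hi]
  rw [this]
  have hm : ∀ i, Measurable ((s i).indicator (r i)) := fun i => (hr i).indicator (hs i)
  have hind := iIndepFun_pi (μ := μ) (X := fun i => (s i).indicator (r i))
    (fun i => (hm i).aemeasurable)
  have := lintegral_prod_eq_prod_lintegral_of_indepFun (μ := Measure.pi μ) Finset.univ
    (fun i a => (s i).indicator (r i) (a i)) hind
    (fun i => (hm i).comp (measurable_pi_apply i))
  rw [this]
  refine Finset.prod_congr rfl fun i _ => ?_
  rw [withDensity_apply _ (hs i), ← lintegral_indicator (hs i)]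
  exact (measurePreserving_eval μ i).lintegral_comp (hm i)

/-- fourth moment of the standard Gaussian -/
noncomputable def K4 : ℝ := ∫ x, x ^ 4 ∂(ProbabilityTheory.gaussianReal 0 1)

lemma K4_nonneg : 0 ≤ K4 := integral_nonneg fun x => by positivity

open ProbabilityTheory in
lemma integrable_pow_gauss (k : ℕ) : Integrable (fun x : ℝ => x ^ k) (gaussianReal 0 1) := by
  rcases Nat.eq_zero_or_pos k with rfl | hk
  · simp
  have := (memLp_id_gaussianReal (μ := 0) (v := 1) (k : NNReal)).integrable_norm_rpow
    (by simpa using hk.ne') (by simp)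
  refine (integrable_norm_iff (by fun_prop)).1 ?_
  refine this.congr (Filter.Eventually.of_forall fun x => ?_)
  simp

open ProbabilityTheory in
lemma gauss_sq : ∫ x, x ^ 2 ∂(gaussianReal 0 1) = 1 := by
  have h := variance_fun_id_gaussianReal (μ := 0) (v := 1)
  rw [variance_eq_integral (by fun_prop)] at h
  simpa using h

open ProbabilityTheory in
lemma gauss_id : ∫ x, x ∂(gaussianReal 0 1) = 0 := integral_id_gaussianReal

open ProbabilityTheory in
lemma gauss_quad_int (α q : ℝ) : Integrable (fun x => (α - q * x) ^ 2) (gaussianReal 0 1) := by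
  have : (fun x : ℝ => (α - q * x) ^ 2) = fun x => α ^ 2 + (-2 * α * q) * x ^ 1 + q ^ 2 * x ^ 2 := by
    ext x; ring
  rw [this]
  exact ((integrable_const _).add ((integrable_pow_gauss 1).const_mul _)).add
    ((integrable_pow_gauss 2).const_mul _)

open ProbabilityTheory in
lemma gauss_quad_mean (α q : ℝ) : ∫ x, (α - q * x) ^ 2 ∂(gaussianReal 0 1) = α ^ 2 + q ^ 2 := by
  have : (fun x : ℝ => (α - q * x) ^ 2) = fun x => α ^ 2 + (-2 * α * q) * x ^ 1 + q ^ 2 * x ^ 2 := by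
    ext x; ring
  have i1 : Integrable (fun x : ℝ => α ^ 2 + (-2 * α * q) * x ^ 1) (gaussianReal 0 1) :=
    (integrable_const _).add ((integrable_pow_gauss 1).const_mul _)
  rw [this, integral_add i1 ((integrable_pow_gauss 2).const_mul _),
    integral_add (integrable_const _) ((integrable_pow_gauss 1).const_mul _),
    integral_const_mul, integral_const_mul, gauss_sq]
  simp

open ProbabilityTheory in
lemma gauss_quad_memLp (α q : ℝ) : MemLp (fun x => (α - q * x) ^ 2) 2 (gaussianReal 0 1) := by
  rw [memLp_two_iff_integrable_sq (by fun_prop)]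
  have : (fun x : ℝ => ((α - q * x) ^ 2) ^ 2) = fun x => α ^ 4 + (-4 * α ^ 3 * q) * x ^ 1
      + (6 * α ^ 2 * q ^ 2) * x ^ 2 + (-4 * α * q ^ 3) * x ^ 3 + q ^ 4 * x ^ 4 := by
    ext x; ring
  rw [this]
  have h := integrable_pow_gauss
  exact (((((integrable_const _).add ((h 1).const_mul _)).add
    ((h 2).const_mul _)).add ((h 3).const_mul _)).add ((h 4).const_mul _))

open ProbabilityTheory in
lemma gauss_quad_var (α q : ℝ) :
    Var[fun x => (α - q * x) ^ 2; gaussianReal 0 1] ≤ 8 * α ^ 2 * q ^ 2 + 2 * q ^ 4 * K4 := by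
  rw [← variance_sub_const (by fun_prop) (α ^ 2)]
  refine (variance_le_expectation_sq (by fun_prop)).trans ?_
  have h := integrable_pow_gauss
  have e : 8 * α ^ 2 * q ^ 2 + 2 * q ^ 4 * K4 =
      ∫ x, ((8 * α ^ 2 * q ^ 2) * x ^ 2 + (2 * q ^ 4) * x ^ 4) ∂(gaussianReal 0 1) := by
    rw [integral_add ((h 2).const_mul _) ((h 4).const_mul _), integral_const_mul,
      integral_const_mul, gauss_sq, K4]; ring
  rw [e]
  refine integral_mono_of_nonneg (Filter.Eventually.of_forall fun x => ?_)
    (((h 2).const_mul _).add ((h 4).const_mul _)) (Filter.Eventually.of_forall fun x => ?_)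
  · simp only [Pi.zero_apply, Pi.pow_apply]; positivity
  · simp only [Pi.pow_apply]
    nlinarith [sq_nonneg (2 * α * q * x + q ^ 2 * x ^ 2)]

open ProbabilityTheory in
lemma gauss_affine (m ρ : ℝ) (hρ : 0 < ρ) :
    gaussianReal m ρ.toNNReal = (gaussianReal 0 1).map (fun x => m + √ρ * x) := by
  have : (fun x => m + √ρ * x) = (fun x => m + x) ∘ (fun x => √ρ * x) := rfl
  rw [this, ← Measure.map_map (by fun_prop) (by fun_prop), gaussianReal_map_const_mul,
    gaussianReal_map_const_add]
  congr 1
  · simp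
  · ext; simp [hρ.le]

open ProbabilityTheory in
lemma ball_prob {n : ℕ} (w ρ : Fin n → ℝ) (hρ : ∀ i, 0 < ρ i) (hρ1 : ∀ i, ρ i ≤ 1)
    (v : ℝ) (hv : 0 < v)
    (hvar : ∑ i, (8 * (ρ i * w i ^ 2) * (1 - ρ i) + 2 * (1 - ρ i) ^ 2 * K4) ≤ v ^ 2 / 4) :
    3 / 4 * ((∏ i, √(ρ i)) * Real.exp (-(∑ i, (1 - ρ i) * (w i ^ 2 - 1) + v) / 2)) ≤
      (Measure.pi fun _ : Fin n => gaussianReal 0 1).real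
        {z | ∑ i, (w i - √(1 - ρ i) * z i) ^ 2 / ρ i ≤ ∑ i, (ρ i * w i ^ 2 + (1 - ρ i)) + v} := by
  set γ := (Measure.pi fun _ : Fin n => gaussianReal 0 1) with hγ
  set T : (Fin n → ℝ) → ℝ := fun z => ∑ i, (w i - √(1 - ρ i) * z i) ^ 2 / ρ i with hT
  set mm := ∑ i, (ρ i * w i ^ 2 + (1 - ρ i)) with hmm
  have hTm : Measurable T := by rw [hT]; fun_prop
  set E : Set (Fin n → ℝ) := {z | |T z - mm| < v} with hE
  have hEm : MeasurableSet E := measurableSet_lt (by fun_prop) measurable_const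
  set Q := Measure.pi fun i => gaussianReal (√(1 - ρ i) * w i) (ρ i).toNNReal with hQ
  -- Q as a pushforward
  have hQ1 : Q = γ.map (fun x i => √(1 - ρ i) * w i + √(ρ i) * x i) := by
    have := fun i => gauss_affine (√(1 - ρ i) * w i) (ρ i) (hρ i)
    rw [hQ, hγ]
    simp_rw [this]
    rw [Measure.pi_map_pi (f := fun i x => √(1 - ρ i) * w i + √(ρ i) * x)
      (fun i => Measurable.aemeasurable (by fun_prop))]
  -- Chebyshev
  have hq : ∀ i, √(1 - ρ i) ^ 2 = 1 - ρ i := fun i => Real.sq_sqrt (by linarith [hρ1 i])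
  have hr : ∀ i, √(ρ i) ^ 2 = ρ i := fun i => Real.sq_sqrt (hρ i).le
  have hQE : 3 / 4 ≤ Q.real E := by
    set X : Fin n → ℝ → ℝ := fun i x => (√(ρ i) * w i - √(1 - ρ i) * x) ^ 2 with hX
    set Y : (Fin n → ℝ) → ℝ := ∑ i, fun ω => X i (ω i) with hY
    have hL : ∀ i, MemLp (X i) 2 (gaussianReal 0 1) := fun i => gauss_quad_memLp _ _
    have hL' : ∀ i, MemLp (fun ω : Fin n → ℝ => X i (ω i)) 2 γ := fun i =>
      (hL i).comp_measurePreserving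
        (measurePreserving_eval (fun _ : Fin n => gaussianReal 0 1) i)
    have hYL : MemLp Y 2 γ := by
      have := memLp_finsetSum Finset.univ (fun i _ => hL' i)
      convert this using 1
      ext ω; simp [hY]
    have hmean : ∫ ω, Y ω ∂γ = mm := by
      simp only [hY, Finset.sum_apply]
      rw [integral_finsetSum _ (fun i _ => (hL' i).integrable (by norm_num)), hmm]
      refine Finset.sum_congr rfl fun i _ => ?_
      have := integral_comp_eval (μ := fun _ : Fin n => gaussianReal 0 1) (i := i) (f := X i)
        (hL i).1
      rw [this, hX]
      simp only
      rw [gauss_quad_mean, mul_pow, hr, hq]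
    have hV : Var[Y; γ] ≤ v ^ 2 / 4 := by
      rw [hY, hγ, variance_sum_pi hL]
      refine le_trans (Finset.sum_le_sum fun i _ => ?_) hvar
      refine (gauss_quad_var _ _).trans (le_of_eq ?_)
      have : √(1 - ρ i) ^ 4 = (√(1 - ρ i) ^ 2) ^ 2 := by ring
      rw [this, mul_pow, hr, hq]
    have hC := meas_ge_le_variance_div_sq hYL hv
    rw [hmean] at hC
    have hEq : Q.real E = γ.real {ω | v ≤ |Y ω - mm|}ᶜ := by
      rw [hQ1, map_measureReal_apply (by fun_prop) hEm]
      congr 1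
      ext x
      simp only [hE, Set.mem_preimage, Set.mem_ofPred_eq, Set.mem_compl_iff, not_le, hT, hY,
        Finset.sum_apply, hX]
      have : ∀ i, (w i - √(1 - ρ i) * (√(1 - ρ i) * w i + √(ρ i) * x i)) ^ 2 / ρ i
          = (√(ρ i) * w i - √(1 - ρ i) * x i) ^ 2 := by
        intro i
        have h1 : w i - √(1 - ρ i) * (√(1 - ρ i) * w i + √(ρ i) * x i) =
          √(ρ i) * (√(ρ i) * w i - √(1 - ρ i) * x i) := by
          linear_combination (-w i) * hq i - w i * hr i
        rw [h1, mul_pow, hr, mul_div_cancel_left₀ _ (hρ i).ne']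
      simp_rw [this]
    have hYm : Measurable Y := by
      have : Y = fun ω => ∑ i, X i (ω i) := by ext; simp [hY]
      rw [this, hX]; fun_prop
    rw [hEq, measureReal_compl (measurableSet_le measurable_const (by fun_prop))]
    have : γ.real {ω | v ≤ |Y ω - mm|} ≤ 1 / 4 := by
      refine ENNReal.toReal_le_of_le_ofReal (by norm_num) (hC.trans ?_)
      refine ENNReal.ofReal_le_ofReal ?_
      rw [div_le_iff₀ (by positivity)]; linarith
    rw [probReal_univ]; linarith
  -- change of measure
  have hQ2 : Q = γ.withDensity (fun z => ∏ i, ENNReal.ofReal ((√(ρ i))⁻¹ *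
      Real.exp (z i ^ 2 / 2 - (z i - √(1 - ρ i) * w i) ^ 2 / (2 * ρ i)))) := by
    have hh := fun i => gaussian_ratio (√(1 - ρ i) * w i) (ρ i) (hρ i)
    rw [hQ]
    simp_rw [hh]
    have : ∀ i, SigmaFinite ((gaussianReal 0 1).withDensity
      (fun z => ENNReal.ofReal ((√(ρ i))⁻¹ *
      Real.exp (z ^ 2 / 2 - (z - √(1 - ρ i) * w i) ^ 2 / (2 * ρ i))))) := by
      intro i; rw [← hh i]; infer_instance
    exact pi_withDensity' _ _ (fun i => by fun_prop)
  have hle : Q.real E ≤ ((∏ i, √(ρ i))⁻¹ *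
      Real.exp ((∑ i, (1 - ρ i) * (w i ^ 2 - 1) + v) / 2)) * γ.real E := by
    have hb : Q E ≤ ENNReal.ofReal ((∏ i, √(ρ i))⁻¹ *
      Real.exp ((∑ i, (1 - ρ i) * (w i ^ 2 - 1) + v) / 2)) * γ E := by
      rw [hQ2, withDensity_apply _ hEm, ← setLIntegral_const]
      refine setLIntegral_mono measurable_const fun z hz => ?_
      rw [← ENNReal.ofReal_prod_of_nonneg (fun i _ => by positivity)]
      refine ENNReal.ofReal_le_ofReal ?_
      rw [Finset.prod_mul_distrib, Finset.prod_inv_distrib, ← Real.exp_sum]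
      gcongr
      have h1 : ∀ i, z i ^ 2 / 2 - (z i - √(1 - ρ i) * w i) ^ 2 / (2 * ρ i) =
          ((1 - ρ i) * (w i ^ 2 - 1) + ((ρ i * w i ^ 2 + (1 - ρ i))
            - (w i - √(1 - ρ i) * z i) ^ 2 / ρ i)) / 2 := by
        intro i
        have := (hρ i).ne'
        field_simp
        linear_combination (z i ^ 2 - w i ^ 2) * hq i
      simp_rw [h1]
      rw [← Finset.sum_div, Finset.sum_add_distrib, Finset.sum_sub_distrib]
      have h2 : |T z - mm| < v := hz
      have := (abs_lt.1 h2).1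
      simp only [hT] at this
      gcongr
      linarith
    have := ENNReal.toReal_mono (ENNReal.mul_ne_top ENNReal.ofReal_ne_top (measure_ne_top _ _)) hb
    rwa [ENNReal.toReal_mul, ENNReal.toReal_ofReal (by positivity)] at this
  have hEsub : γ.real E ≤ γ.real {z | T z ≤ mm + v} := by
    refine measureReal_mono (fun z hz => ?_) 
    have h2 : |T z - mm| < v := hz
    have := (abs_lt.1 h2).2
    simp only [Set.mem_ofPred_eq]; linarith
  refine le_trans ?_ hEsub
  have hP : 0 < ∏ i, √(ρ i) := Finset.prod_pos fun i _ => Real.sqrt_pos.2 (hρ i)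
  have h3 := hQE.trans hle
  calc _ ≤ (((∏ i, √(ρ i))⁻¹ *
      Real.exp ((∑ i, (1 - ρ i) * (w i ^ 2 - 1) + v) / 2)) * γ.real E) * ((∏ i, √(ρ i)) * Real.exp (-(∑ i, (1 - ρ i) * (w i ^ 2 - 1) + v) / 2)) := by gcongr
    _ = γ.real E * ((∏ i, √(ρ i))⁻¹ * (∏ i, √(ρ i))) * (Real.exp ((∑ i, (1 - ρ i) * (w i ^ 2 - 1) + v) / 2) * Real.exp (-(∑ i, (1 - ρ i) * (w i ^ 2 - 1) + v) / 2)) := by ring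
    _ = γ.real E := by
      rw [inv_mul_cancel₀ hP.ne', ← Real.exp_add]
      rw [neg_div, add_neg_cancel]; simp

section Aux

open ProbabilityTheory

lemma cover {X Y : Type*} [MeasurableSpace X] [MeasurableSpace Y] (ν : Measure X)
    [IsFiniteMeasure ν] (μ : Measure Y) [IsProbabilityMeasure μ] (K : Set (X × Y))
    (hK : MeasurableSet K) (G : Set X) (hG : MeasurableSet G) (p : ℝ)
    (hp : ∀ w ∈ G, p ≤ μ.real {y | (w, y) ∈ K}) (m : ℕ) :
    ∃ y : Fin m → Y, ν.real (G ∩ {w | ∀ j, (w, y j) ∉ K}) ≤ Real.exp (-(p * m)) * ν.real G := by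
  set M := Measure.pi (fun _ : Fin m => μ) with hM
  set D : Set (X × (Fin m → Y)) := {q | q.1 ∈ G ∧ ∀ j, (q.1, q.2 j) ∉ K} with hD
  have hDm : MeasurableSet D := by
    refine (measurable_fst hG).inter ?_
    have : {q : X × (Fin m → Y) | ∀ j, (q.1, q.2 j) ∉ K} =
        ⋂ j, (fun q : X × (Fin m → Y) => (q.1, q.2 j)) ⁻¹' Kᶜ := by
      ext q; simp
    change MeasurableSet {q : X × (Fin m → Y) | ∀ j, (q.1, q.2 j) ∉ K}
    rw [this]
    exact MeasurableSet.iInter fun j => (by fun_prop : Measurable fun q : X × (Fin m → Y) => (q.1, q.2 j)) hK.compl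
  have h1 : (ν.prod M) D ≤ ENNReal.ofReal (Real.exp (-(p * m))) * ν G := by
    rw [Measure.prod_apply hDm, ← lintegral_indicator_const hG]
    refine lintegral_mono fun w => ?_
    by_cases hw : w ∈ G
    · rw [Set.indicator_of_mem hw]
      have e : Prod.mk w ⁻¹' D = Set.univ.pi fun _ : Fin m => {y | (w, y) ∈ K}ᶜ := by
        ext y; simp [hD, hw]
      have hKw : MeasurableSet {y | (w, y) ∈ K} := measurable_prodMk_left hK
      rw [e, hM, Measure.pi_pi, Finset.prod_const, Finset.card_univ, Fintype.card_fin]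
      have : μ {y | (w, y) ∈ K}ᶜ ≤ ENNReal.ofReal (Real.exp (-p)) := by
        rw [← ofReal_measureReal]
        refine ENNReal.ofReal_le_ofReal ?_
        rw [measureReal_compl hKw, probReal_univ]
        linarith [hp w hw, Real.add_one_le_exp (-p)]
      calc _ ≤ ENNReal.ofReal (Real.exp (-p)) ^ m := by gcongr
        _ = _ := by
          rw [← ENNReal.ofReal_pow (by positivity), ← Real.exp_nat_mul]
          congr 2; ring
    · rw [Set.indicator_of_notMem hw]
      have e : Prod.mk w ⁻¹' D = ∅ := by
        ext y; simp [hD, hw]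
      simp [e]
  rw [Measure.prod_apply_symm hDm] at h1
  obtain ⟨y, hy⟩ := exists_le_lintegral (μ := M)
    (measurable_measure_prodMk_right (μ := ν) hDm).aemeasurable
  refine ⟨y, ?_⟩
  have h2 := ENNReal.toReal_mono (ENNReal.mul_ne_top ENNReal.ofReal_ne_top (measure_ne_top _ _))
    (hy.trans h1)
  rw [ENNReal.toReal_mul, ENNReal.toReal_ofReal (by positivity)] at h2
  exact h2


lemma chi_aux (x : ℝ) (hx : 0 ≤ x) (hx1 : x ≤ 1 / 4) :
    (√(1 - 2 * x))⁻¹ ≤ Real.exp (x + 2 * x ^ 2) := by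
  have h0 : 0 < 1 - 2 * x := by linarith
  rw [inv_le_comm₀ (by positivity) (by positivity), ← Real.exp_neg]
  refine Real.le_sqrt_of_sq_le ?_
  rw [← Real.exp_nat_mul, show ((2 : ℕ) : ℝ) * -(x + 2 * x ^ 2) = -(2 * x + (2 * x) ^ 2) by push_cast; ring,
    Real.exp_neg, inv_le_comm₀ (by positivity) h0]
  refine le_trans ?_ (Real.quadratic_le_exp_of_nonneg (by positivity))
  rw [inv_le_iff_one_le_mul₀ h0]
  set y := 2 * x
  have hy0 : 0 ≤ y := by positivity
  have hy : y ≤ 1 / 2 := by simp only [y]; linarith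
  have : 0 ≤ y ^ 2 * (1 - y - y ^ 2 - y ^ 3) := by
    have a2 : y ^ 2 ≤ 1 / 4 := by nlinarith
    have a3 : y ^ 3 ≤ 1 / 8 := by
      calc y ^ 3 ≤ (1 / 2) ^ 3 := by gcongr
        _ = 1 / 8 := by norm_num
    apply mul_nonneg (by positivity); linarith
  nlinarith

lemma chi_fun (x : ℝ) : (fun w : ℝ => gaussianPDFReal 0 1 w • Real.exp (x * (w ^ 2 - 1))) =
    fun w => ((√(2 * π))⁻¹ * Real.exp (-x)) * Real.exp (-(1 / 2 - x) * w ^ 2) := by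
  ext w
  simp only [gaussianPDFReal, smul_eq_mul, NNReal.coe_one, mul_one, sub_zero]
  rw [mul_assoc, mul_assoc, ← Real.exp_add, ← Real.exp_add]
  congr 2; ring

lemma chi_integrable (x : ℝ) (hx1 : x ≤ 1 / 4) :
    Integrable (fun w : ℝ => Real.exp (x * (w ^ 2 - 1))) (gaussianReal 0 1) := by
  rw [gaussianReal_of_var_ne_zero _ one_ne_zero]
  have := integrable_withDensity_iff_integrable_smul' (μ := volume) (measurable_gaussianPDF 0 1)
    (Filter.Eventually.of_forall fun _ => gaussianPDF_lt_top)
    (g := fun w : ℝ => Real.exp (x * (w ^ 2 - 1)))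
  rw [this]
  simp only [toReal_gaussianPDF]
  rw [chi_fun]
  exact (integrable_exp_neg_mul_sq (by linarith)).const_mul _

lemma chi_mgf (x : ℝ) (hx : 0 ≤ x) (hx1 : x ≤ 1 / 4) :
    ∫ w : ℝ, Real.exp (x * (w ^ 2 - 1)) ∂(gaussianReal 0 1) ≤ Real.exp (2 * x ^ 2) := by
  rw [integral_gaussianReal_eq_integral_smul one_ne_zero, chi_fun, integral_const_mul,
    integral_gaussian]
  have h0 : 0 < 1 - 2 * x := by linarith
  have e : (√(2 * π))⁻¹ * √(π / (1 / 2 - x)) = (√(1 - 2 * x))⁻¹ := by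
    rw [← Real.sqrt_inv, ← Real.sqrt_inv, ← Real.sqrt_mul (by positivity)]
    congr 1
    have : (1 / 2 - x) ≠ 0 := by linarith
    have := Real.pi_pos.ne'
    field_simp
  calc _ = Real.exp (-x) * ((√(2 * π))⁻¹ * √(π / (1 / 2 - x))) := by ring
    _ ≤ Real.exp (-x) * Real.exp (x + 2 * x ^ 2) := by rw [e]; gcongr; exact chi_aux x hx hx1
    _ = _ := by rw [← Real.exp_add]; congr 1; ring

lemma chern {n : ℕ} (a : Fin n → ℝ) (ha : ∀ i, 0 ≤ a i) (ha1 : ∀ i, a i ≤ 1) (θ : ℝ) (hθ : 0 ≤ θ)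
    (hθ1 : θ ≤ 1 / 4) (u : ℝ) :
    (Measure.pi fun _ : Fin n => gaussianReal 0 1).real {w | u ≤ ∑ i, a i * (w i ^ 2 - 1)} ≤
      Real.exp (-θ * u + 2 * θ ^ 2 * n) := by
  have hx : ∀ i, θ * a i ≤ 1 / 4 := fun i => by nlinarith [ha i, ha1 i]
  have hfun : (fun w : Fin n → ℝ => Real.exp (θ * ∑ i, a i * (w i ^ 2 - 1))) =
      fun w => ∏ i, Real.exp ((θ * a i) * (w i ^ 2 - 1)) := by
    ext w
    rw [← Real.exp_sum, Finset.mul_sum]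
    congr 1
    exact Finset.sum_congr rfl fun i _ => by ring
  have hexpInt : Integrable (fun w : Fin n → ℝ => Real.exp (θ * ∑ i, a i * (w i ^ 2 - 1)))
      (Measure.pi fun _ : Fin n => gaussianReal 0 1) := by
    rw [hfun]
    exact Integrable.fintype_prod (f := fun i x => Real.exp ((θ * a i) * (x ^ 2 - 1)))
      fun i => chi_integrable _ (hx i)
  refine (measure_ge_le_exp_mul_mgf u hθ hexpInt).trans ?_
  rw [Real.exp_add]
  gcongr
  rw [mgf, hfun, integral_fintype_prod_eq_prod (f := fun i x => Real.exp ((θ * a i) * (x ^ 2 - 1)))]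
  calc _ ≤ ∏ i : Fin n, Real.exp (2 * θ ^ 2) := by
        refine Finset.prod_le_prod (fun i _ => integral_nonneg fun x => by positivity) fun i _ => ?_
        refine (chi_mgf _ (by have := ha i; positivity) (hx i)).trans ?_
        have h1 : (θ * a i) ^ 2 ≤ θ ^ 2 :=
          pow_le_pow_left₀ (mul_nonneg hθ (ha i)) (mul_le_of_le_one_right hθ (ha1 i)) 2
        exact Real.exp_le_exp.2 (by linarith)
    _ = _ := by
        rw [Finset.prod_const, ← Real.exp_nat_mul]; simp; ring_nf

lemma ball_core {n : ℕ} (lam : Fin n → ℝ) (t : ℝ) (ht : 0 < t) (k : ℝ)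
    (hk : k = ∑ i, if t < lam i then (1 : ℝ) else 0) (hk0 : 0 < k) (a v s : ℝ) (ha : 0 ≤ a)
    (hv : 0 < v) (hs : s = t * k / (k + a + v)) (ρ : Fin n → ℝ)
    (hρ : ∀ i, ρ i = if t < lam i then s / lam i else 1) (w : Fin n → ℝ)
    (hw1 : ∑ i, (if t < lam i then ρ i else 0) * (w i ^ 2 - 1) ≤ a)
    (hw2 : ∑ i, (1 - ρ i) * (w i ^ 2 - 1) ≤ a)
    (hvar : 8 * (k + a) + 2 * K4 * k ≤ v ^ 2 / 4) :
    3 / 4 * Real.exp (-(1 / 2) * (∑ i, if t < lam i then Real.log (lam i / t) else 0) - (a + v)) ≤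
      (Measure.pi fun _ : Fin n => gaussianReal 0 1).real
        {z | ∑ i, (if t < lam i then lam i * (w i - √(1 - ρ i) * z i) ^ 2 else 0) ≤ t * k} := by
  have hs0 : 0 < s := by rw [hs]; positivity
  have hst : s ≤ t := by
    rw [hs, div_le_iff₀ (by positivity)]; nlinarith
  have hsk : s * (k + a + v) = t * k := by
    rw [hs]; field_simp
  have hρ0 : ∀ i, 0 < ρ i := fun i => by
    rw [hρ]; split_ifs with h
    · have := ht.trans h; positivity
    · norm_num
  have hρ1 : ∀ i, ρ i ≤ 1 := fun i => by
    rw [hρ]; split_ifs with h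
    · rw [div_le_one (ht.trans h)]; linarith
    · norm_num
  have hsum1 : ∑ i, (if t < lam i then ρ i * w i ^ 2 + (1 - ρ i) else 0) ≤ k + a := by
    have : ∑ i, (if t < lam i then ρ i * w i ^ 2 + (1 - ρ i) else 0) =
      (∑ i, (if t < lam i then ρ i else 0) * (w i ^ 2 - 1)) + k := by
      rw [hk, ← Finset.sum_add_distrib]
      refine Finset.sum_congr rfl fun i _ => ?_
      split_ifs <;> ring
    linarith
  have hK := K4_nonneg
  have hvar' : ∑ i, (8 * (ρ i * w i ^ 2) * (1 - ρ i) + 2 * (1 - ρ i) ^ 2 * K4) ≤ v ^ 2 / 4 := by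
    have h1 : ∑ i, (8 * (ρ i * w i ^ 2) * (1 - ρ i) + 2 * (1 - ρ i) ^ 2 * K4) ≤
      ∑ i, (8 * (if t < lam i then ρ i * w i ^ 2 + (1 - ρ i) else 0) +
        2 * K4 * (if t < lam i then (1 : ℝ) else 0)) := by
      refine Finset.sum_le_sum fun i _ => ?_
      have h0 := hρ0 i
      have h1 := hρ1 i
      split_ifs with h
      · have e1 : (ρ i * w i ^ 2) * (1 - ρ i) ≤ ρ i * w i ^ 2 :=
          mul_le_of_le_one_right (by positivity) (by linarith)
        have e2 : (1 - ρ i) ^ 2 ≤ 1 := by nlinarith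
        nlinarith [mul_le_mul_of_nonneg_right e2 hK]
      · have : ρ i = 1 := by rw [hρ, if_neg h]
        rw [this]; simp
    refine h1.trans ?_
    rw [Finset.sum_add_distrib, ← Finset.mul_sum, ← Finset.mul_sum, ← hk]
    linarith
  have hb := ball_prob w ρ hρ0 hρ1 v hv hvar'
  refine le_trans ?_ (hb.trans (measureReal_mono fun z hz => ?_))
  · -- exponent estimate
    have hprod : ∏ i, √(ρ i) = Real.exp ((1 / 2) * ∑ i, Real.log (ρ i)) := by
      rw [Finset.mul_sum, Real.exp_sum]
      refine Finset.prod_congr rfl fun i _ => ?_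
      rw [Real.sqrt_eq_rpow, Real.rpow_def_of_pos (hρ0 i)]; ring_nf
    rw [hprod, ← Real.exp_add]
    have hlog : ∑ i, Real.log (ρ i) =
        -(∑ i, if t < lam i then Real.log (lam i / t) else 0) + k * Real.log (s / t) := by
      rw [hk, Finset.sum_mul, ← Finset.sum_neg_distrib, ← Finset.sum_add_distrib]
      refine Finset.sum_congr rfl fun i _ => ?_
      rw [hρ]
      split_ifs with h
      · have := ht.trans h
        rw [Real.log_div hs0.ne' this.ne', Real.log_div hs0.ne' ht.ne',
          Real.log_div this.ne' ht.ne']; ring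
      · simp
    have hlog2 : -(a + v) ≤ k * Real.log (s / t) := by
      have h1 := Real.one_sub_inv_le_log_of_pos (show 0 < s / t by positivity)
      have h2 : k * (1 - (s / t)⁻¹) = -(a + v) := by
        rw [hs]; field_simp; ring
      rw [← h2]; gcongr
    gcongr
    rw [hlog]; linarith
  · simp only [Set.mem_ofPred_eq] at hz ⊢
    have e1 : ∑ i, (if t < lam i then lam i * (w i - √(1 - ρ i) * z i) ^ 2 else 0) =
      s * (∑ i, (if t < lam i then (w i - √(1 - ρ i) * z i) ^ 2 / ρ i else 0)) := by
      rw [Finset.mul_sum]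
      refine Finset.sum_congr rfl fun i _ => ?_
      split_ifs with h
      · have := ht.trans h
        have e : ρ i = s / lam i := by rw [hρ, if_pos h]
        rw [show (w i - √(1 - ρ i) * z i) ^ 2 / ρ i = (w i - √(1 - ρ i) * z i) ^ 2 * (ρ i)⁻¹ from rfl]
        have e2 : s * (ρ i)⁻¹ = lam i := by rw [e]; field_simp
        linear_combination (-(w i - √(1 - ρ i) * z i) ^ 2) * e2
      · simp
    have e2 : ∑ i, (w i - √(1 - ρ i) * z i) ^ 2 / ρ i - ∑ i, (ρ i * w i ^ 2 + (1 - ρ i)) =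
      ∑ i, (if t < lam i then (w i - √(1 - ρ i) * z i) ^ 2 / ρ i else 0) -
      ∑ i, (if t < lam i then ρ i * w i ^ 2 + (1 - ρ i) else 0) := by
      rw [← Finset.sum_sub_distrib, ← Finset.sum_sub_distrib]
      refine Finset.sum_congr rfl fun i _ => ?_
      split_ifs with h
      · rfl
      · have : ρ i = 1 := by rw [hρ, if_neg h]
        rw [this]; simp
    rw [e1, ← hsk]
    gcongr
    linarith

lemma select {X : Type*} [MeasurableSpace X] (m : ℕ) (C : Fin m → Set X)
    (hC : ∀ j, MeasurableSet (C j)) :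
    ∃ f : X → Fin (m + 1), Measurable f ∧ ∀ w, (∀ j : Fin m, f w = j.castSucc → w ∈ C j) ∧
      (f w = Fin.last m → ∀ j, w ∉ C j) := by
  classical
  induction m with
  | zero => exact ⟨fun _ => 0, measurable_const, fun w => ⟨fun j => j.elim0, fun _ j => j.elim0⟩⟩
  | succ m ih =>
    obtain ⟨f, hf, h⟩ := ih (fun j => C j.succ) (fun j => hC _)
    refine ⟨fun w => if w ∈ C 0 then 0 else (f w).succ, ?_, fun w => ?_⟩
    · exact Measurable.ite (hC 0) measurable_const ((measurable_of_countable Fin.succ).comp hf)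
    · by_cases h0 : w ∈ C 0
      · simp only [h0, if_true]
        refine ⟨fun j hj => ?_, fun hl => ?_⟩
        · have : j = 0 := by
            ext; have := congrArg Fin.val hj; simpa using this.symm
          rw [this]; exact h0
        · exact absurd (congrArg Fin.val hl) (by simp)
      · simp only [h0, if_false]
        refine ⟨fun j hj => ?_, fun hl j => ?_⟩
        · refine Fin.cases (fun hj => ?_) (fun j hj => ?_) j hj
          · exact absurd (congrArg Fin.val hj) (by simp)
          · refine (h w).1 j ?_
            ext; have := congrArg Fin.val hj; simpa using this
        · refine Fin.cases h0 (fun j => ?_) j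
          refine (h w).2 ?_ j
          ext; have := congrArg Fin.val hl; simpa using this

lemma pi_pow_integrable {n : ℕ} (i : Fin n) (j : ℕ) :
    Integrable (fun w : Fin n → ℝ => w i ^ j) (Measure.pi fun _ : Fin n => gaussianReal 0 1) :=
  (measurePreserving_eval (fun _ : Fin n => gaussianReal 0 1) i).integrable_comp_of_integrable
    (integrable_pow_gauss j)

lemma pi_pow_integral {n : ℕ} (i : Fin n) (j : ℕ) :
    ∫ w : Fin n → ℝ, w i ^ j ∂(Measure.pi fun _ : Fin n => gaussianReal 0 1) =
      ∫ x, x ^ j ∂(gaussianReal 0 1) :=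
  integral_comp_eval (μ := fun _ : Fin n => gaussianReal 0 1) (i := i) (f := fun x : ℝ => x ^ j)
    (integrable_pow_gauss j).1

lemma diag_main {n : ℕ} (lam : Fin n → ℝ) (hlam : ∀ i, 0 ≤ lam i) (t : ℝ) (ht : 0 < t) (k : ℝ)
    (hk : k = ∑ i, if t < lam i then (1 : ℝ) else 0) (hk0 : 0 < k) (a v s : ℝ) (ha : 0 ≤ a)
    (hv : 0 < v) (hs : s = t * k / (k + a + v)) (ρ : Fin n → ℝ)
    (hρ : ∀ i, ρ i = if t < lam i then s / lam i else 1)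
    (hvar : 8 * (k + a) + 2 * K4 * k ≤ v ^ 2 / 4)
    (P : ℝ)
    (hP1 : (Measure.pi fun _ : Fin n => gaussianReal 0 1).real
      {w | a ≤ ∑ i, (if t < lam i then ρ i else 0) * (w i ^ 2 - 1)} ≤ P)
    (hP2 : (Measure.pi fun _ : Fin n => gaussianReal 0 1).real
      {w | a ≤ ∑ i, (1 - ρ i) * (w i ^ 2 - 1)} ≤ P)
    (p : ℝ) (hp : p = 3 / 4 * Real.exp
      (-(1 / 2) * (∑ i, if t < lam i then Real.log (lam i / t) else 0) - (a + v)))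
    (ε : ℝ) (hε : 0 < ε) (m : ℕ) :
    ∃ (f : (Fin n → ℝ) → Fin (m + 1)) (g : Fin (m + 1) → (Fin n → ℝ)), Measurable f ∧
      ∫ w, (∑ i, lam i * (w i - g (f w) i) ^ 2) ∂(Measure.pi fun _ : Fin n => gaussianReal 0 1) ≤
        ∑ i, min (lam i) t + (Real.exp (-(p * m)) + ε * K4 + P / (2 * ε)) * ∑ i, lam i := by
  classical
  set γ := (Measure.pi fun _ : Fin n => gaussianReal 0 1) with hγ
  set h : (Fin n → ℝ) → ℝ := fun w => ∑ i, (if t < lam i then lam i * w i ^ 2 else 0) with hh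
  have h0 : ∀ w, 0 ≤ h w := fun w => Finset.sum_nonneg fun i _ => by
    split_ifs
    · have := hlam i; positivity
    · exact le_rfl
  have hhm : Measurable h := by
    rw [hh]
    refine Finset.measurable_sum _ fun i _ => ?_
    split_ifs <;> fun_prop
  have hhi : Integrable h γ := by
    refine integrable_finsetSum _ fun i _ => ?_
    split_ifs
    · exact (pi_pow_integrable i 2).const_mul _
    · simp
  have hhI : ∫ w, h w ∂γ ≤ ∑ i, lam i := by
    rw [hh, integral_finsetSum]
    · refine Finset.sum_le_sum fun i _ => ?_
      split_ifs
      · rw [integral_const_mul, pi_pow_integral, gauss_sq]; simp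
      · simpa using hlam i
    · intro i _
      split_ifs
      · exact (pi_pow_integrable i 2).const_mul _
      · simp
  set K : Set ((Fin n → ℝ) × (Fin n → ℝ)) :=
    {q | ∑ i, (if t < lam i then lam i * (q.1 i - √(1 - ρ i) * q.2 i) ^ 2 else 0) ≤ t * k} with hKdef
  have hK : MeasurableSet K := by
    refine measurableSet_le (Finset.measurable_sum _ fun i _ => ?_) measurable_const
    split_ifs <;> fun_prop
  set G : Set (Fin n → ℝ) := {w | ∑ i, (if t < lam i then ρ i else 0) * (w i ^ 2 - 1) < a} ∩
    {w | ∑ i, (1 - ρ i) * (w i ^ 2 - 1) < a} with hGdef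
  have hG : MeasurableSet G :=
    (measurableSet_lt (by fun_prop) measurable_const).inter
      (measurableSet_lt (by fun_prop) measurable_const)
  have hGP : γ.real Gᶜ ≤ 2 * P := by
    have : Gᶜ ⊆ {w | a ≤ ∑ i, (if t < lam i then ρ i else 0) * (w i ^ 2 - 1)} ∪
        {w | a ≤ ∑ i, (1 - ρ i) * (w i ^ 2 - 1)} := by
      intro w hw
      by_contra hc
      simp only [Set.mem_union, Set.mem_ofPred_eq, not_or, not_le] at hc
      exact hw ⟨hc.1, hc.2⟩
    calc _ ≤ _ := measureReal_mono this
      _ ≤ _ := measureReal_union_le _ _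
      _ ≤ _ := by linarith
  have hpG : ∀ w ∈ G, p ≤ γ.real {z | (w, z) ∈ K} := fun w hw => by
    rw [hp]
    exact ball_core lam t ht k hk hk0 a v s ha hv hs ρ hρ w (le_of_lt hw.1) (le_of_lt hw.2) hvar
  set ν := γ.withDensity (fun w => ENNReal.ofReal (h w)) with hν
  have : IsFiniteMeasure ν := isFiniteMeasure_withDensity_ofReal hhi.2
  have hνr : ∀ s, MeasurableSet s → ν.real s = ∫ w, s.indicator h w ∂γ := fun s hs => by
    rw [integral_indicator hs, integral_eq_lintegral_of_nonneg_ae (Filter.Eventually.of_forall h0)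
      hhm.aestronglyMeasurable, measureReal_def, hν, withDensity_apply _ hs]
  obtain ⟨y, hy⟩ := cover ν γ K hK G hG p hpG m
  set N := G ∩ {w | ∀ j, (w, y j) ∉ K} with hN
  have hCm : ∀ j, MeasurableSet {w | (w, y j) ∈ K} := fun j => measurable_prodMk_right hK
  have hNm : MeasurableSet N := by
    refine hG.inter ?_
    have : {w | ∀ j, (w, y j) ∉ K} = ⋂ j, {w | (w, y j) ∈ K}ᶜ := by ext; simp
    rw [this]
    exact MeasurableSet.iInter fun j => (hCm j).compl
  have hNb : ∫ w, N.indicator h w ∂γ ≤ Real.exp (-(p * m)) * ∑ i, lam i := by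
    rw [← hνr N hNm]
    refine hy.trans ?_
    gcongr
    rw [hνr G hG]
    refine le_trans (integral_mono (hhi.indicator hG) hhi fun w => ?_) hhI
    exact Set.indicator_le_self' (fun _ _ => h0 _) w
  obtain ⟨f, hf, hfs⟩ := select m (fun j => {w | (w, y j) ∈ K}) hCm
  set g : Fin (m + 1) → (Fin n → ℝ) :=
    Fin.lastCases (fun _ => 0) (fun j i => √(1 - ρ i) * y j i) with hg
  refine ⟨f, g, hf, ?_⟩
  -- dominating function
  set Bd : (Fin n → ℝ) → ℝ := fun w => (t * k + ∑ i, (if t < lam i then 0 else lam i * w i ^ 2)) +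
    N.indicator h w + ∑ i, lam i * (ε * w i ^ 4 + Gᶜ.indicator (fun _ => 1 / (4 * ε)) w) with hBd
  have hI1 : Integrable (fun w => ∑ i, (if t < lam i then 0 else lam i * w i ^ 2)) γ := by
    refine integrable_finsetSum _ fun i _ => ?_
    split_ifs
    · simp
    · exact (pi_pow_integrable i 2).const_mul _
  have hI2 : ∀ i, Integrable (fun w => lam i * (ε * w i ^ 4 + Gᶜ.indicator (fun _ => 1 / (4 * ε)) w)) γ :=
    fun i => (((pi_pow_integrable i 4).const_mul _).add
      ((integrable_const _).indicator hG.compl)).const_mul _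
  have hI12 : Integrable (fun w => t * k + ∑ i, (if t < lam i then 0 else lam i * w i ^ 2)) γ :=
    (integrable_const _).add hI1
  have hI3 : Integrable (fun w => (t * k + ∑ i, (if t < lam i then 0 else lam i * w i ^ 2)) +
    N.indicator h w) γ := hI12.add (hhi.indicator hNm)
  have hI4 : Integrable (fun w => ∑ i, lam i * (ε * w i ^ 4 + Gᶜ.indicator (fun _ => 1 / (4 * ε)) w)) γ :=
    integrable_finsetSum _ fun i _ => hI2 i
  have hBi : Integrable Bd γ := hI3.add hI4
  have hpt : ∀ w, ∑ i, lam i * (w i - g (f w) i) ^ 2 ≤ Bd w := by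
    intro w
    have hInn : 0 ≤ ∑ i, (if t < lam i then 0 else lam i * w i ^ 2) :=
      Finset.sum_nonneg fun i _ => by
        have := hlam i
        split_ifs <;> positivity
    have h4nn : 0 ≤ ∑ i, lam i * (ε * w i ^ 4 + Gᶜ.indicator (fun _ => 1 / (4 * ε)) w) :=
      Finset.sum_nonneg fun i _ => by
        have := hlam i
        have : 0 ≤ Gᶜ.indicator (fun _ => 1 / (4 * ε)) w :=
          Set.indicator_nonneg (fun _ _ => by positivity) w
        positivity
    have hNn : 0 ≤ N.indicator h w := Set.indicator_nonneg (fun _ _ => h0 _) w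
    by_cases hl : f w = Fin.last m
    · have hgz : g (f w) = fun _ => 0 := by rw [hl, hg]; simp
      have hnc := (hfs w).2 hl
      have hsplit : ∑ i, lam i * (w i - g (f w) i) ^ 2 =
          h w + ∑ i, (if t < lam i then 0 else lam i * w i ^ 2) := by
        rw [hgz, hh, ← Finset.sum_add_distrib]
        refine Finset.sum_congr rfl fun i _ => ?_
        split_ifs <;> simp
      rw [hsplit]
      simp only [hBd]
      have htk : 0 ≤ t * k := by positivity
      by_cases hw : w ∈ G
      · have : w ∈ N := ⟨hw, hnc⟩
        rw [Set.indicator_of_mem this]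
        linarith
      · have hw' : w ∈ Gᶜ := hw
        rw [Set.indicator_of_mem hw'] at h4nn ⊢
        have : h w ≤ ∑ i, lam i * (ε * w i ^ 4 + 1 / (4 * ε)) := by
          refine Finset.sum_le_sum fun i _ => ?_
          have hli := hlam i
          have : w i ^ 2 ≤ ε * w i ^ 4 + 1 / (4 * ε) := by
            have e : ε * w i ^ 4 + 1 / (4 * ε) - w i ^ 2 = ε * (w i ^ 2 - 1 / (2 * ε)) ^ 2 := by
              field_simp; ring
            have : 0 ≤ ε * (w i ^ 2 - 1 / (2 * ε)) ^ 2 := by positivity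
            linarith
          split_ifs
          · gcongr
          · positivity
        linarith
    · obtain ⟨j, hj⟩ := Fin.exists_castSucc_eq.2 hl
      have hmem := (hfs w).1 j hj.symm
      have hgz : g (f w) = fun i => √(1 - ρ i) * y j i := by rw [← hj, hg]; simp
      have hsplit : ∑ i, lam i * (w i - g (f w) i) ^ 2 =
          ∑ i, (if t < lam i then lam i * (w i - √(1 - ρ i) * y j i) ^ 2 else 0) +
            ∑ i, (if t < lam i then 0 else lam i * w i ^ 2) := by
        rw [hgz, ← Finset.sum_add_distrib]
        refine Finset.sum_congr rfl fun i _ => ?_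
        split_ifs with hi
        · simp
        · have : ρ i = 1 := by rw [hρ, if_neg hi]
          simp only [this]; simp
      rw [hsplit]
      have hm' : ∑ i, (if t < lam i then lam i * (w i - √(1 - ρ i) * y j i) ^ 2 else 0) ≤ t * k :=
        hmem
      simp only [hBd]
      linarith
  refine (integral_mono_of_nonneg (Filter.Eventually.of_forall fun w => ?_) hBi
    (Filter.Eventually.of_forall hpt)).trans ?_
  · exact Finset.sum_nonneg fun i _ => by have := hlam i; positivity
  · simp only [hBd]
    rw [integral_add hI3 hI4, integral_add hI12 (hhi.indicator hNm),
      integral_add (integrable_const _) hI1, integral_finsetSum _ (fun i _ => hI2 i)]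
    have e1 : ∫ w, ∑ i, (if t < lam i then 0 else lam i * w i ^ 2) ∂γ =
        ∑ i, (if t < lam i then 0 else lam i) := by
      rw [integral_finsetSum]
      · refine Finset.sum_congr rfl fun i _ => ?_
        split_ifs
        · simp
        · rw [integral_const_mul, pi_pow_integral, gauss_sq]; simp
      · intro i _
        split_ifs
        · simp
        · exact (pi_pow_integrable i 2).const_mul _
    have e2 : t * k + ∑ i, (if t < lam i then 0 else lam i) = ∑ i, min (lam i) t := by
      rw [hk, Finset.mul_sum, ← Finset.sum_add_distrib]
      refine Finset.sum_congr rfl fun i _ => ?_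
      split_ifs with hi
      · rw [min_eq_right hi.le]; ring
      · rw [min_eq_left (not_lt.1 hi)]; ring
    have e3 : ∀ i, ∫ w, lam i * (ε * w i ^ 4 + Gᶜ.indicator (fun _ => 1 / (4 * ε)) w) ∂γ ≤
        lam i * (ε * K4 + P / (2 * ε)) := by
      intro i
      rw [integral_const_mul, integral_add ((pi_pow_integrable i 4).const_mul _)
        ((integrable_const _).indicator hG.compl), integral_const_mul, pi_pow_integral,
        integral_indicator_const _ hG.compl]
      have hli := hlam i
      have : γ.real Gᶜ • (1 / (4 * ε)) ≤ P / (2 * ε) := by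
        rw [smul_eq_mul]
        calc _ ≤ (2 * P) * (1 / (4 * ε)) := by gcongr
          _ = _ := by field_simp; ring
      rw [show ∫ x, x ^ 4 ∂(gaussianReal 0 1) = K4 from rfl]
      gcongr
    have e4 := Finset.sum_le_sum (s := Finset.univ) fun i _ => e3 i
    rw [← Finset.sum_mul] at e4
    rw [e1]
    simp only [integral_const, probReal_univ, smul_eq_mul, one_mul]
    linarith

end Aux

lemma rotate {n : ℕ} (U : Matrix (Fin n) (Fin n) ℝ) (hU : U * Uᵀ = 1) :
    MeasurePreserving (fun w => Uᵀ *ᵥ w) (stdGaussian n) (stdGaussian n) := by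
  let Lm : EuclideanSpace ℝ (Fin n) →ₗ[ℝ] EuclideanSpace ℝ (Fin n) := Matrix.toEuclideanLin Uᵀ
  have hLm : ∀ x, Lm x = WithLp.toLp 2 (Uᵀ *ᵥ x.ofLp) := fun x => rfl
  have hnorm : ∀ x, ‖Lm x‖ = ‖x‖ := by
    intro x
    rw [hLm, EuclideanSpace.norm_eq, EuclideanSpace.norm_eq]
    congr 1
    simp only [Real.norm_eq_abs, sq_abs]
    have h1 : ∀ y : Fin n → ℝ, ∑ i, y i ^ 2 = y ⬝ᵥ y := fun y => by simp [dotProduct, sq]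
    have : (Uᵀ *ᵥ x.ofLp) ⬝ᵥ (Uᵀ *ᵥ x.ofLp) = x.ofLp ⬝ᵥ x.ofLp := by
      rw [Matrix.dotProduct_mulVec, Matrix.vecMul_transpose, Matrix.mulVec_mulVec, hU,
        Matrix.one_mulVec]
    rw [h1, this, h1]
  let Li : EuclideanSpace ℝ (Fin n) →ₗᵢ[ℝ] EuclideanSpace ℝ (Fin n) := ⟨Lm, hnorm⟩
  let Le := Li.toLinearIsometryEquiv rfl
  have hm : Measurable (fun w : Fin n → ℝ => Uᵀ *ᵥ w) := by
    have : Continuous (fun w : Fin n → ℝ => Uᵀ *ᵥ w) := by fun_prop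
    exact this.measurable
  refine ⟨hm, ?_⟩
  have e1 := ProbabilityTheory.map_pi_eq_stdGaussian (ι := Fin n)
  have e2 := ProbabilityTheory.stdGaussian_map Le
  have hLe : ∀ x, Le x = Lm x := fun x => rfl
  rw [← e1, Measure.map_map Le.continuous.measurable (by fun_prop)] at e2
  have e3 := congrArg (Measure.map (WithLp.ofLp : EuclideanSpace ℝ (Fin n) → _)) e2
  rw [Measure.map_map (by fun_prop) (Le.continuous.measurable.comp (by fun_prop)),
    Measure.map_map (by fun_prop) (by fun_prop)] at e3
  have f1 : (WithLp.ofLp : EuclideanSpace ℝ (Fin n) → _) ∘ (⇑Le ∘ WithLp.toLp 2) =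
    fun w => Uᵀ *ᵥ w := rfl
  have f2 : (WithLp.ofLp : EuclideanSpace ℝ (Fin n) → _) ∘ (WithLp.toLp 2) = id := rfl
  rw [f1, f2, Measure.map_id] at e3
  exact e3

lemma rwf_eq {n : ℕ} (hn : 2 ≤ n) (lam : Fin n → ℝ) (hlam : ∀ i, 0 ≤ lam i) (t : ℝ) (ht : 0 < t) :
    ∑ i, (if t < lam i then Real.log (lam i / t) else 0) = 2 * n * Real.log 2 * Rwf lam t := by
  have h2 : 0 < Real.log 2 := Real.log_pos (by norm_num)
  have hn0 : (n : ℝ) ≠ 0 := by positivity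
  have : 2 * n * Real.log 2 * Rwf lam t = ∑ i, Real.log 2 * max 0 (Real.logb 2 (lam i / t)) := by
    rw [Rwf, ← Finset.mul_sum]; field_simp
  rw [this]
  refine Finset.sum_congr rfl fun i _ => ?_
  split_ifs with h
  · rw [max_eq_right (Real.logb_nonneg (by norm_num) ((one_le_div ht).2 h.le)), Real.logb]
    field_simp
  · rw [max_eq_left, mul_zero]
    exact Real.logb_nonpos (by norm_num) (div_nonneg (hlam i) ht.le)
      ((div_le_one ht).2 (not_lt.1 h))

set_option maxHeartbeats 2000000 in
/-- Diagonal version, with a measurable encoder. -/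
lemma diag_thm (B : ℝ) (hB : 0 < B) :
    ∃ c : ℝ, 0 < c ∧
      ∀ n : ℕ, 2 ≤ n → ∀ R : ℝ, 0 < R - c * Real.sqrt (Real.log n / n) →
      ∀ lam : Fin n → ℝ, (∀ i, 0 ≤ lam i) →
      ∀ t : ℝ, 0 < t → Rwf lam t = R - c * Real.sqrt (Real.log n / n) →
      ∀ M : ℕ, M = ⌊(2 : ℝ) ^ ((n : ℝ) * R)⌋₊ →
      ∃ (f : (Fin n → ℝ) → Fin M) (g : Fin M → (Fin n → ℝ)), Measurable f ∧
        ∫ w, (∑ i, lam i * (w i - g (f w) i) ^ 2) ∂(stdGaussian n)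
          ≤ (n : ℝ) * Dwf lam t + c * (n : ℝ) ^ (-B) * ∑ i, lam i := by
  have hK := K4_nonneg
  obtain ⟨C1, hC1⟩ : ∃ C1, C1 = 8 * B + 1 := ⟨_, rfl⟩
  obtain ⟨C2, hC2⟩ : ∃ C2, C2 = 64 + 32 * C1 + 16 * K4 := ⟨_, rfl⟩
  have hC1p : 1 ≤ C1 := by linarith
  have hC2p : 64 ≤ C2 := by linarith
  obtain ⟨c, hc⟩ : ∃ c, c = 5 + 2 * (C1 + C2) + 12 * B := ⟨_, rfl⟩
  have hcp : 0 < c := by linarith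
  refine ⟨c, hcp, ?_⟩
  intro n hn R hR lam hlam t ht hRw M hM
  have hn2 : (2 : ℝ) ≤ n := by exact_mod_cast hn
  have hn0 : (0 : ℝ) < n := by linarith
  set L := Real.log n with hL
  clear_value L
  have hl2 : (1 / 2 : ℝ) < Real.log 2 := by linarith [Real.log_two_gt_d9]
  have hL2 : Real.log 2 ≤ L := hL ▸ Real.log_le_log (by norm_num) hn2
  have hLn : L ≤ n := by linarith [Real.log_le_sub_one_of_pos hn0]
  have hL0 : 0 < L := by linarith
  obtain ⟨S, hS⟩ : ∃ S, S = √(n * L) := ⟨_, rfl⟩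
  have hS2 : S ^ 2 = n * L := by rw [hS]; exact Real.sq_sqrt (by positivity)
  have hS1 : 1 ≤ S := by rw [hS]; exact Real.one_le_sqrt.2 (by nlinarith)
  have hSL : L ≤ S := by rw [hS]; exact Real.le_sqrt_of_sq_le (by nlinarith)
  set r := √(L / n) with hr
  clear_value r
  have hr2 : r ^ 2 = L / n := by rw [hr]; exact Real.sq_sqrt (by positivity)
  have hr0 : 0 ≤ r := by rw [hr]; exact Real.sqrt_nonneg _
  have hr1 : r ≤ 1 := by rw [hr]; exact Real.sqrt_le_one.2 ((div_le_one hn0).2 hLn)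
  have hnr : n * r = S := by
    rw [hS, hr, show (n : ℝ) * L = n ^ 2 * (L / n) by field_simp, Real.sqrt_mul (by positivity),
      Real.sqrt_sq hn0.le]
  have hrS : r * S = L := by
    rw [← hnr, show r * (n * r) = n * r ^ 2 by ring, hr2]; field_simp
  obtain ⟨k, hk⟩ : ∃ k : ℝ, k = ∑ i, if t < lam i then (1 : ℝ) else 0 := ⟨_, rfl⟩
  have hkn : k ≤ n := by
    calc k = _ := hk
      _ ≤ ∑ i : Fin n, (1 : ℝ) := Finset.sum_le_sum fun i _ => by split_ifs <;> norm_num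
      _ = n := by simp
  have hrw := rwf_eq hn lam hlam t ht
  have hk0 : 0 < k := by
    by_contra hcon
    have hk' : k = 0 := le_antisymm (not_lt.1 hcon)
      (by rw [hk]; exact Finset.sum_nonneg fun i _ => by split_ifs <;> norm_num)
    rw [hk] at hk'
    have hz := (Finset.sum_eq_zero_iff_of_nonneg
      (fun i _ => by split_ifs <;> norm_num)).1 hk'
    have : ∑ i, (if t < lam i then Real.log (lam i / t) else 0) = 0 := by
      refine Finset.sum_eq_zero fun i hi => ?_
      have := hz i hi
      split_ifs with h
      · simp [h] at this
      · rfl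
    rw [this, hRw] at hrw
    have : 0 < 2 * n * Real.log 2 * (R - c * r) := by positivity
    linarith
  obtain ⟨a, ha⟩ : ∃ a, a = C1 * S := ⟨_, rfl⟩
  obtain ⟨v, hv⟩ : ∃ v, v = C2 * S := ⟨_, rfl⟩
  have ha0 : 0 ≤ a := by rw [ha]; positivity
  have hv0 : 0 < v := by rw [hv]; positivity
  obtain ⟨s, hs⟩ : ∃ s, s = t * k / (k + a + v) := ⟨_, rfl⟩
  obtain ⟨ρ, hρ⟩ : ∃ ρ : Fin n → ℝ, ρ = fun i => if t < lam i then s / lam i else 1 := ⟨_, rfl⟩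
  have hs0 : 0 < s := by rw [hs]; positivity
  have hst : s ≤ t := by
    rw [hs, div_le_iff₀ (by positivity)]; nlinarith
  have hρ0 : ∀ i, 0 ≤ ρ i := fun i => by
    simp only [hρ]; split_ifs with h
    · have := ht.trans h; positivity
    · norm_num
  have hρ1 : ∀ i, ρ i ≤ 1 := fun i => by
    simp only [hρ]; split_ifs with h
    · rw [div_le_one (ht.trans h)]; linarith
    · norm_num
  have hvar : 8 * (k + a) + 2 * K4 * k ≤ v ^ 2 / 4 := by
    have hSS : S ≤ S ^ 2 := by nlinarith
    have hnS : (n : ℝ) ≤ 2 * S ^ 2 := by rw [hS2]; nlinarith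
    have h1 : C1 * S ≤ C1 * S ^ 2 := by gcongr
    have h2 : K4 * k ≤ K4 * (2 * S ^ 2) := by gcongr; linarith
    have h3 : v ^ 2 / 4 ≥ C2 * S ^ 2 / 4 := by
      rw [hv, mul_pow]
      have : C2 ≤ C2 ^ 2 := by nlinarith
      gcongr
    have h4 : C2 * S ^ 2 / 4 = 16 * S ^ 2 + 8 * (C1 * S ^ 2) + 4 * K4 * S ^ 2 := by
      rw [hC2]; ring
    rw [ha]
    linarith
  have hexp : -(r / 4) * a + 2 * (r / 4) ^ 2 * n ≤ -(2 * B * L) := by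
    have e1 : -(r / 4) * a = -(C1 * L / 4) := by rw [ha]; linear_combination (-C1 / 4) * hrS
    have e2 : 2 * (r / 4) ^ 2 * n = L / 8 := by
      rw [div_pow, hr2]; field_simp; norm_num
    rw [e1, e2, hC1]; nlinarith
  have hP1 := (chern (fun i => if t < lam i then ρ i else 0)
    (fun i => by split_ifs; exacts [hρ0 i, le_rfl])
    (fun i => by split_ifs; exacts [hρ1 i, zero_le_one]) (r / 4) (by linarith) (by linarith) a).trans
    (Real.exp_le_exp.2 hexp)
  have hP2 := (chern (fun i => 1 - ρ i) (fun i => by linarith [hρ1 i])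
    (fun i => by linarith [hρ0 i]) (r / 4) (by linarith) (by linarith) a).trans
    (Real.exp_le_exp.2 hexp)
  -- number of codewords
  have hnR : n * R = n * Rwf lam t + c * S := by rw [hRw, ← hnr]; ring
  have hRw0 : 0 < Rwf lam t := by rw [hRw]; exact hR
  set X := (2 : ℝ) ^ ((n : ℝ) * R) with hX
  clear_value X
  have hXe : X = Real.exp (Real.log 2 * (n * Rwf lam t) + Real.log 2 * (c * S)) := by
    rw [hX, Real.rpow_def_of_pos (by norm_num), hnR]; ring_nf
  have hX4 : 4 ≤ X := by
    have : (2 : ℝ) ^ (2 : ℝ) ≤ X := by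
      rw [hX]
      refine Real.rpow_le_rpow_of_exponent_le (by norm_num) ?_
      rw [hnR]
      have : 0 < n * Rwf lam t := by positivity
      nlinarith
    have h4 : (2 : ℝ) ^ (2 : ℝ) = 4 := by norm_num
    linarith
  have hMX : X - 1 < M := by rw [hM]; exact Nat.sub_one_lt_floor X
  have hM1 : 1 ≤ M := by
    have : (0 : ℝ) < M := by linarith
    exact_mod_cast this
  obtain ⟨m, rfl⟩ : ∃ m, M = m + 1 := ⟨M - 1, by omega⟩
  have hmX : X / 4 ≤ m := by push_cast at hMX; linarith
  obtain ⟨p, hp⟩ : ∃ p, p = 3 / 4 * Real.exp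
      (-(1 / 2) * (∑ i, if t < lam i then Real.log (lam i / t) else 0) - (a + v)) := ⟨_, rfl⟩
  have hpm : B * L ≤ p * m := by
    have e1 : p * (X / 4) = 3 / 16 * Real.exp (Real.log 2 * (c * S) - (a + v)) := by
      rw [hp, hXe, hrw]
      have : Real.exp (Real.log 2 * (c * S) - (a + v)) =
        Real.exp (-(1 / 2) * (2 * n * Real.log 2 * Rwf lam t) - (a + v)) *
          Real.exp (Real.log 2 * (n * Rwf lam t) + Real.log 2 * (c * S)) := by
        rw [← Real.exp_add]; congr 1; ring
      rw [this]; ring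
    have e2 : 6 * B * L ≤ Real.log 2 * (c * S) - (a + v) := by
      have h1 : (1 / 2) * (c * S) ≤ Real.log 2 * (c * S) := by gcongr
      have h2 : B * L ≤ B * S := by gcongr
      have h3 : (1 / 2) * (c * S) - (a + v) = 5 / 2 * S + 6 * (B * S) := by
        rw [hc, ha, hv]; ring
      linarith
    have e3 := Real.add_one_le_exp (Real.log 2 * (c * S) - (a + v))
    have hp0 : 0 ≤ p := by rw [hp]; positivity
    have e4 : p * (X / 4) ≤ p * m := by gcongr
    have : 0 < B * L := by positivity
    linarith
  obtain ⟨f, g, hf, hfg⟩ := diag_main lam hlam t ht k hk hk0 a v s ha0 hv0 hs ρ (fun i => by rw [hρ])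
    hvar (Real.exp (-(2 * B * L))) hP1 hP2 p hp (Real.exp (-(B * L))) (Real.exp_pos _) m
  refine ⟨f, g, hf, ?_⟩
  rw [stdGaussian]
  refine hfg.trans ?_
  have hD : (n : ℝ) * Dwf lam t = ∑ i, min (lam i) t := by
    rw [Dwf]; field_simp
  have hnB : (n : ℝ) ^ (-B) = Real.exp (-(B * L)) := by
    rw [Real.rpow_def_of_pos hn0]; congr 1; rw [hL]; ring
  rw [hD, hnB]
  have hsum0 : 0 ≤ ∑ i, lam i := Finset.sum_nonneg fun i _ => hlam i
  gcongr
  have e1 : Real.exp (-(p * m)) ≤ Real.exp (-(B * L)) := by gcongr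
  have e2 : Real.exp (-(2 * B * L)) / (2 * Real.exp (-(B * L))) = Real.exp (-(B * L)) / 2 := by
    have : Real.exp (-(2 * B * L)) = Real.exp (-(B * L)) * Real.exp (-(B * L)) := by
      rw [← Real.exp_add]; congr 1; ring
    rw [this]; field_simp
  rw [e2]
  have e3 : (2 + K4) * Real.exp (-(B * L)) ≤ c * Real.exp (-(B * L)) := by
    gcongr; linarith
  have := Real.exp_pos (-(B * L))
  linarith

/-- The full theorem, with a measurable encoder. -/
lemma full_thm (B : ℝ) (hB : 0 < B) :
    ∃ c : ℝ, 0 < c ∧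
      ∀ n : ℕ, 2 ≤ n → ∀ R : ℝ, 0 < R - c * Real.sqrt (Real.log n / n) →
      ∀ (Sig : Matrix (Fin n) (Fin n) ℝ), Sig.PosSemidef →
      ∀ (U : Matrix (Fin n) (Fin n) ℝ), U * Uᵀ = 1 →
      ∀ lam : Fin n → ℝ, Sig = U * Matrix.diagonal lam * Uᵀ →
      ∀ t' : ℝ, 0 < t' → Rwf lam t' = R - c * Real.sqrt (Real.log n / n) →
      ∃ (f : (Fin n → ℝ) → Fin ⌊(2 : ℝ) ^ ((n : ℝ) * R)⌋₊)
        (g : Fin ⌊(2 : ℝ) ^ ((n : ℝ) * R)⌋₊ → (Fin n → ℝ)), Measurable f ∧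
        ∫ w, dSig Sig w (g (f w)) ∂(stdGaussian n)
          ≤ (n : ℝ) * Dwf lam t' + c * (n : ℝ) ^ (-B) * Sig.trace := by
  obtain ⟨c, hc, H⟩ := diag_thm B hB
  refine ⟨c, hc, ?_⟩
  intro n hn R hR Sig hPSD U hU lam hSig t ht hRw
  have hU' : Uᵀ * U = 1 := mul_eq_one_comm.1 hU
  have hdiag : Uᵀ * Sig * U = Matrix.diagonal lam := by
    rw [hSig]
    calc Uᵀ * (U * Matrix.diagonal lam * Uᵀ) * U
        = (Uᵀ * U) * Matrix.diagonal lam * (Uᵀ * U) := by simp only [Matrix.mul_assoc]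
      _ = _ := by rw [hU']; simp
  have hlam : ∀ i, 0 ≤ lam i := by
    have h := hPSD.conjTranspose_mul_mul_same U
    rw [Matrix.conjTranspose_eq_transpose_of_trivial, hdiag, Matrix.posSemidef_diagonal_iff] at h
    exact h
  have htr : Sig.trace = ∑ i, lam i := by
    rw [hSig, Matrix.trace_mul_comm, ← Matrix.mul_assoc, hU', one_mul, Matrix.trace_diagonal]
  obtain ⟨M, hM⟩ : ∃ M, M = ⌊(2 : ℝ) ^ ((n : ℝ) * R)⌋₊ := ⟨_, rfl⟩
  rw [← hM]
  obtain ⟨f, g, hf, hfg⟩ := H n hn R hR lam hlam t ht hRw M hM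
  have hrot := rotate U hU
  refine ⟨fun w => f (Uᵀ *ᵥ w), fun j => U *ᵥ g j, hf.comp hrot.measurable, ?_⟩
  rw [htr]
  refine le_trans (le_of_eq ?_) hfg
  have hd : ∀ w, dSig Sig w (U *ᵥ g (f (Uᵀ *ᵥ w))) =
      (fun x => ∑ i, lam i * (x i - g (f x) i) ^ 2) (Uᵀ *ᵥ w) := by
    intro w
    simp only
    set y := g (f (Uᵀ *ᵥ w))
    have e : Uᵀ *ᵥ (w - U *ᵥ y) = Uᵀ *ᵥ w - y := by
      rw [Matrix.mulVec_sub, Matrix.mulVec_mulVec, hU', Matrix.one_mulVec]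
    rw [dSig, hSig, ← Matrix.mulVec_mulVec, ← Matrix.mulVec_mulVec, Matrix.dotProduct_mulVec,
      ← Matrix.mulVec_transpose, e]
    simp only [dotProduct, Matrix.mulVec_diagonal, Pi.sub_apply]
    exact Finset.sum_congr rfl fun i _ => by ring
  have hgm : Measurable fun x => g (f x) := (measurable_of_countable g).comp hf
  have hFm : Measurable (fun x : Fin n → ℝ => ∑ i, lam i * (x i - g (f x) i) ^ 2) := by
    refine Finset.measurable_sum _ fun i _ => ?_
    have h1 : Measurable fun x => g (f x) i := (measurable_pi_apply i).comp hgm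
    exact (((measurable_pi_apply i).sub h1).pow_const 2).const_mul (lam i)
  have key : ∀ F : (Fin n → ℝ) → ℝ, Measurable F →
      ∫ w, F (Uᵀ *ᵥ w) ∂(stdGaussian n) = ∫ w, F w ∂(stdGaussian n) := by
    intro F hF
    have h1 := integral_map (μ := stdGaussian n) hrot.measurable.aemeasurable
      (f := F) hF.aestronglyMeasurable
    rw [hrot.map_eq] at h1
    exact h1.symm
  exact (integral_congr_ae (Filter.Eventually.of_forall hd)).trans (key _ hFm)

/-- achievability of the waterfilling bound (oracle setting). -/
theorem stmt_1 (B : ℝ) (hB : 0 < B) :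
    ∃ c : ℝ, 0 < c ∧
      ∀ n : ℕ, 2 ≤ n → ∀ R : ℝ, 0 < R - c * Real.sqrt (Real.log n / n) →
      ∀ (Sig : Matrix (Fin n) (Fin n) ℝ), Sig.PosSemidef → Sig ≠ 0 →
      ∀ (U : Matrix (Fin n) (Fin n) ℝ), U * Uᵀ = 1 →
      ∀ lam : Fin n → ℝ, Sig = U * Matrix.diagonal lam * Uᵀ →
      ∀ t' : ℝ, 0 < t' → Rwf lam t' = R - c * Real.sqrt (Real.log n / n) →
      ∃ (f : (Fin n → ℝ) → Fin ⌊(2 : ℝ) ^ ((n : ℝ) * R)⌋₊)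
        (g : Fin ⌊(2 : ℝ) ^ ((n : ℝ) * R)⌋₊ → (Fin n → ℝ)),
        ∫ w, dSig Sig w (g (f w)) ∂(stdGaussian n)
          ≤ (n : ℝ) * Dwf lam t' + c * (n : ℝ) ^ (-B) * Sig.trace := by
  obtain ⟨c, hc, H⟩ := full_thm B hB
  refine ⟨c, hc, fun n hn R hR Sig hP _ U hU lam hS t ht hRw => ?_⟩
  obtain ⟨f, g, _, h⟩ := H n hn R hR Sig hP U hU lam hS t ht hRw
  exact ⟨f, g, h⟩
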